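/- Variance estimate, off-diagonal part (Lemma 4.6, second part): fix θ with −√2 < θ < √2 and R ∈ ℕ. With x_θ^N = x/N + θ and T^N_{r,∞}(x) = { y ∈ ℝ : r/N ≤ |x_θ^N − y| }, one has lim_{r→∞} limsup_{N→∞} sup_{|x| < R} ∬_{T^N_{r,∞}(x) × T^N_{r,∞}(x)} L^N(y,z)² / ( |x_θ^N − y| · |x_θ^N − z| ) dy dz = 0. -/

import Mathlib

/-!
The ladder relations `ψ_n' = √(2n) ψ_{n-1} - x ψ_n` and `ψ_n' = x ψ_n - √(2(n+1)) ψ_{n+1}` give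
the derivative of a product `ψ_m ψ_n` with no factor `x` left over. Integrating it yields
orthonormality; summing it over `m = n < N` telescopes, so that
`d/dx K^N(x,x) = -√(2N) ψ_{N-1}(x) ψ_N(x)` and hence `K^N(x,x) ≤ √(2N)` for every `x`. Since `K^N`
is the kernel of a projection, `∫ L^N(y,z)² dz = L^N(y,y) / N ≤ √2 / N` uniformly in `y`.

By symmetry of `L^N` and `2ab ≤ a² + b²` with `a = |c - y|⁻¹` and `b = |c - z|⁻¹`, the double
integral over `|c - y|, |c - z| ≥ r/N` is at most
`(√2 / N) ∫_{|c - y| ≥ r/N} |c - y|⁻² dy = (√2 / N) (2N / r) = 2√2 / r`,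
uniformly in the center `c`.
-/

open Real MeasureTheory Filter Set

/-- Physicists' Hermite polynomial `H_n(x) = (-1)^n e^{x^2} (d/dx)^n e^{-x^2}`. -/
noncomputable def hermiteP (n : ℕ) (x : ℝ) : ℝ :=
  (-1 : ℝ) ^ n * Real.exp (x ^ 2) * iteratedDeriv n (fun t => Real.exp (-t ^ 2)) x

/-- Oscillator wave function `ψ_n(x) = (√π 2^n n!)^{-1/2} e^{-x^2/2} H_n(x)`. -/
noncomputable def osc (n : ℕ) (x : ℝ) : ℝ :=
  (Real.sqrt (Real.sqrt Real.pi * 2 ^ n * (n.factorial : ℝ)))⁻¹ *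
    Real.exp (-x ^ 2 / 2) * hermiteP n x

/-- The kernel `K^N(x,y) = Σ_{k=0}^{N-1} ψ_k(x) ψ_k(y)`. -/
noncomputable def kerK (N : ℕ) (x y : ℝ) : ℝ :=
  ∑ k ∈ Finset.range N, osc k x * osc k y

/-- The rescaled kernel `L^N(x,y) = N^{-1/2} K^N(√N x, √N y)`. -/
noncomputable def kerL (N : ℕ) (x y : ℝ) : ℝ :=
  (Real.sqrt (N : ℝ))⁻¹ * kerK N (Real.sqrt (N : ℝ) * x) (Real.sqrt (N : ℝ) * y)

/-! ### Ladder relations -/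

lemma hasDerivAt_iteratedDeriv_exp_neg_sq (n : ℕ) (x : ℝ) :
    HasDerivAt (iteratedDeriv n fun t => rexp (-t ^ 2))
      (iteratedDeriv (n + 1) (fun t => rexp (-t ^ 2)) x) x := by
  have hsmooth : ContDiff ℝ (n + 1) fun t : ℝ => rexp (-t ^ 2) := by fun_prop
  rw [iteratedDeriv_succ]
  exact (hsmooth.differentiable_iteratedDeriv n (mod_cast n.lt_succ_self) x).hasDerivAt

lemma hasDerivAt_hermiteP_raising (n : ℕ) (x : ℝ) :
    HasDerivAt (hermiteP n) (2 * x * hermiteP n x - hermiteP (n + 1) x) x := by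
  have hexp : HasDerivAt (fun t : ℝ => rexp (t ^ 2)) (rexp (x ^ 2) * (2 * x)) x := by
    simpa using (hasDerivAt_pow 2 x).exp
  refine ((hexp.const_mul ((-1) ^ n)).mul
    (hasDerivAt_iteratedDeriv_exp_neg_sq n x)).congr_deriv ?_
  simp only [hermiteP, pow_succ]
  ring

lemma hermiteP_zero (x : ℝ) : hermiteP 0 x = 1 := by
  simp [hermiteP, ← Real.exp_add]

-- At `n = 0` the coefficient vanishes, so here and below the truncated index `n - 1` is harmless.
lemma hasDerivAt_hermiteP_lowering (n : ℕ) (x : ℝ) :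
    HasDerivAt (hermiteP n) (2 * n * hermiteP (n - 1) x) x := by
  induction n generalizing x with
  | zero => simpa [funext hermiteP_zero] using hasDerivAt_const x (1 : ℝ)
  | succ n ih =>
    have hrec : hermiteP (n + 1) =
        fun t => 2 * t * hermiteP n t - 2 * n * hermiteP (n - 1) t := by
      funext t
      linarith [(hasDerivAt_hermiteP_raising n t).unique (ih t)]
    have hpred : n * hermiteP (n - 1 + 1) x = n * hermiteP n x := by cases n <;> simp
    rw [hrec]
    refine ((((hasDerivAt_id' x).const_mul 2).fun_mul (ih x)).fun_sub
      ((hasDerivAt_hermiteP_raising (n - 1) x).const_mul _)).congr_deriv ?_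
    push_cast
    linear_combination 2 * hpred

lemma exists_polynomial_eval_eq_hermiteP (n : ℕ) :
    ∃ p : Polynomial ℝ, ∀ x, p.eval x = hermiteP n x := by
  induction n with
  | zero => exact ⟨1, fun x => by simp [hermiteP_zero]⟩
  | succ n ih =>
    obtain ⟨p, hp⟩ := ih
    refine ⟨2 * .X * p - p.derivative, fun x => ?_⟩
    have hderiv : p.derivative.eval x = 2 * x * hermiteP n x - hermiteP (n + 1) x := by
      refine (p.hasDerivAt x).unique ?_
      rw [funext hp]
      exact hasDerivAt_hermiteP_raising n x
    simp [hderiv, hp]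

lemma sqrt_osc_normalization_succ (n : ℕ) :
    √(√π * 2 ^ (n + 1) * (n + 1).factorial) =
      √(2 * (n + 1)) * √(√π * 2 ^ n * n.factorial) := by
  rw [← sqrt_mul (by positivity), Nat.factorial_succ]
  push_cast
  ring_nf

lemma hasDerivAt_osc_of_hasDerivAt_hermiteP {n : ℕ} {x H' : ℝ}
    (h : HasDerivAt (hermiteP n) H' x) :
    HasDerivAt (osc n)
      ((√(√π * 2 ^ n * n.factorial))⁻¹ * rexp (-x ^ 2 / 2) * H' - x * osc n x) x := by
  have hexp : HasDerivAt (fun t : ℝ => rexp (-t ^ 2 / 2)) (rexp (-x ^ 2 / 2) * (-x)) x := by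
    refine (((hasDerivAt_pow 2 x).fun_neg.div_const 2).exp).congr_deriv ?_
    push_cast
    ring
  refine ((hexp.const_mul _).mul h).congr_deriv ?_
  rw [osc]
  ring

lemma hasDerivAt_osc_raising (n : ℕ) (x : ℝ) :
    HasDerivAt (osc n) (x * osc n x - √(2 * (n + 1)) * osc (n + 1) x) x := by
  refine (hasDerivAt_osc_of_hasDerivAt_hermiteP
    (hasDerivAt_hermiteP_raising n x)).congr_deriv ?_
  simp only [osc, sqrt_osc_normalization_succ]
  field_simp
  ring

lemma hasDerivAt_osc_lowering (n : ℕ) (x : ℝ) :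
    HasDerivAt (osc n) (√(2 * n) * osc (n - 1) x - x * osc n x) x := by
  refine (hasDerivAt_osc_of_hasDerivAt_hermiteP
    (hasDerivAt_hermiteP_lowering n x)).congr_deriv ?_
  cases n with
  | zero => simp
  | succ n =>
    have hsq : √(2 * (n + 1) : ℝ) ^ 2 = 2 * (n + 1) := sq_sqrt (by positivity)
    simp only [osc, sqrt_osc_normalization_succ, Nat.add_sub_cancel, Nat.cast_add_one]
    field_simp
    rw [hsq]

lemma hasDerivAt_osc_mul_osc (m n : ℕ) (x : ℝ) :
    HasDerivAt (fun t => osc m t * osc n t)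
      (√(2 * m) * (osc (m - 1) x * osc n x) - √(2 * (n + 1)) * (osc m x * osc (n + 1) x)) x :=
  ((hasDerivAt_osc_lowering m x).fun_mul (hasDerivAt_osc_raising n x)).congr_deriv (by ring)

lemma continuous_osc (n : ℕ) : Continuous (osc n) :=
  continuous_iff_continuousAt.2 fun x => (hasDerivAt_osc_raising n x).continuousAt

/-! ### Orthonormality -/

lemma integrable_polynomial_mul_exp_neg_mul_sq {b : ℝ} (hb : 0 < b) (p : Polynomial ℝ) :
    Integrable fun x : ℝ => p.eval x * rexp (-b * x ^ 2) := by
  induction p using Polynomial.induction_on' with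
  | add p q hp hq => simpa only [Polynomial.eval_add, add_mul] using hp.fun_add hq
  | monomial n a =>
    simpa [mul_assoc] using (integrable_rpow_mul_exp_neg_mul_sq hb
      (s := n) (neg_one_lt_zero.trans_le n.cast_nonneg)).const_mul a

lemma exp_neg_one_mul_sq (x : ℝ) :
    rexp (-1 * x ^ 2) = rexp (-x ^ 2 / 2) * rexp (-x ^ 2 / 2) := by
  rw [← Real.exp_add, add_halves, neg_one_mul]

lemma integrable_osc_mul_osc (m n : ℕ) : Integrable fun x => osc m x * osc n x := by
  obtain ⟨p, hp⟩ := exists_polynomial_eval_eq_hermiteP m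
  obtain ⟨q, hq⟩ := exists_polynomial_eval_eq_hermiteP n
  convert (integrable_polynomial_mul_exp_neg_mul_sq one_pos (p * q)).const_mul
    ((√(√π * 2 ^ m * m.factorial))⁻¹ * (√(√π * 2 ^ n * n.factorial))⁻¹) using 2 with x
  rw [osc, osc, Polynomial.eval_mul, hp, hq, exp_neg_one_mul_sq]
  ring

lemma sqrt_mul_integral_osc_mul_osc_succ (m n : ℕ) :
    √(2 * (n + 1)) * ∫ x, osc m x * osc (n + 1) x =
      √(2 * m) * ∫ x, osc (m - 1) x * osc n x := by
  have hlow := (integrable_osc_mul_osc (m - 1) n).const_mul √(2 * m)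
  have hraise := (integrable_osc_mul_osc m (n + 1)).const_mul √(2 * (n + 1))
  have hzero := integral_eq_zero_of_hasDerivAt_of_integrable (hasDerivAt_osc_mul_osc m n)
    (hlow.sub hraise) (integrable_osc_mul_osc m n)
  rw [integral_sub hlow hraise, integral_const_mul, integral_const_mul] at hzero
  linarith

lemma integral_osc_zero_mul_osc_zero : ∫ x, osc 0 x * osc 0 x = 1 := by
  have hsq (x : ℝ) : osc 0 x * osc 0 x = (√π)⁻¹ * rexp (-1 * x ^ 2) := by
    have hnorm : (√(√π))⁻¹ * (√(√π))⁻¹ = (√π)⁻¹ := by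
      rw [← mul_inv, mul_self_sqrt (sqrt_nonneg π)]
    rw [exp_neg_one_mul_sq, ← hnorm]
    simp only [osc, hermiteP_zero, pow_zero, Nat.factorial_zero, Nat.cast_one, mul_one]
    ring
  simp_rw [hsq]
  rw [integral_const_mul, integral_gaussian, div_one, inv_mul_cancel₀ (by positivity)]

theorem integral_osc_mul_osc (m n : ℕ) :
    ∫ x, osc m x * osc n x = if m = n then 1 else 0 := by
  have hpos (k : ℕ) : √(k + 1 : ℝ) ≠ 0 := by positivity
  induction n generalizing m with
  | zero =>
    cases m with
    | zero => simpa using integral_osc_zero_mul_osc_zero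
    | succ m =>
      simpa [hpos, mul_comm (osc (m + 1) _)] using sqrt_mul_integral_osc_mul_osc_succ 0 m
  | succ n ih =>
    have h := sqrt_mul_integral_osc_mul_osc_succ m n
    cases m with
    | zero => simpa [hpos] using h
    | succ m =>
      rw [Nat.add_sub_cancel, ih, Nat.cast_add_one] at h
      obtain rfl | hmn := eq_or_ne m n
      · exact mul_left_cancel₀ (a := √(2 * (m + 1))) (by positivity) (by simpa using h)
      · simpa [hpos, hmn] using h

/-! ### The kernel on the diagonal -/

lemma integral_abs_mul_le {α : Type*} [MeasurableSpace α] {μ : Measure α} {f g : α → ℝ}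
    (hf : Integrable (fun x => f x * f x) μ) (hg : Integrable (fun x => g x * g x) μ) :
    ∫ x, |f x * g x| ∂μ ≤ (∫ x, f x * f x ∂μ + ∫ x, g x * g x ∂μ) / 2 := by
  have hamgm (x : α) : |f x * g x| ≤ (f x * f x + g x * g x) / 2 := by
    rw [abs_le]
    constructor <;> nlinarith [sq_nonneg (f x + g x), sq_nonneg (f x - g x)]
  rw [← integral_add hf hg, ← integral_div]
  exact integral_mono_of_nonneg (.of_forall fun _ => abs_nonneg _) ((hf.add hg).div_const 2)
    (.of_forall hamgm)

lemma integral_abs_osc_mul_osc_le_one (m n : ℕ) : ∫ x, |osc m x * osc n x| ≤ 1 := by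
  simpa [integral_osc_mul_osc] using
    integral_abs_mul_le (integrable_osc_mul_osc m m) (integrable_osc_mul_osc n n)

lemma norm_le_integral_norm_of_hasDerivAt {E : Type*} [NormedAddCommGroup E] [NormedSpace ℝ E]
    [CompleteSpace E] {f f' : ℝ → E} (hderiv : ∀ x, HasDerivAt f (f' x) x)
    (hf : Integrable f) (hf' : Integrable f') (x : ℝ) : ‖f x‖ ≤ ∫ t, ‖f' t‖ := by
  have hzero := tendsto_zero_of_hasDerivAt_of_integrableOn_Iic (a := x) (fun t _ => hderiv t)
    hf'.integrableOn hf.integrableOn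
  have hftc := integral_Iic_of_hasDerivAt_of_tendsto' (a := x) (fun t _ => hderiv t)
    hf'.integrableOn hzero
  calc ‖f x‖ = ‖∫ t in Iic x, f' t‖ := by rw [hftc, sub_zero]
    _ ≤ ∫ t in Iic x, ‖f' t‖ := norm_integral_le_integral_norm _
    _ ≤ ∫ t, ‖f' t‖ :=
        setIntegral_le_integral hf'.norm (.of_forall fun t => norm_nonneg _)

lemma hasDerivAt_kerK_self (N : ℕ) (x : ℝ) :
    HasDerivAt (fun t => kerK N t t) (-(√(2 * N) * (osc (N - 1) x * osc N x))) x := by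
  refine (HasDerivAt.fun_sum fun n _ => hasDerivAt_osc_mul_osc n n x).congr_deriv ?_
  have htelescope :=
    Finset.sum_range_sub' (fun n : ℕ => √(2 * n) * (osc (n - 1) x * osc n x)) N
  simpa using htelescope

lemma kerK_self_le (N : ℕ) (x : ℝ) : kerK N x x ≤ √(2 * N) := by
  have hint : Integrable fun t => kerK N t t :=
    integrable_finsetSum _ fun n _ => integrable_osc_mul_osc n n
  have hint' : Integrable fun t => -(√(2 * N) * (osc (N - 1) t * osc N t)) :=
    ((integrable_osc_mul_osc _ _).const_mul _).neg
  calc kerK N x x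
      ≤ ∫ t, ‖-(√(2 * N) * (osc (N - 1) t * osc N t))‖ :=
        (le_norm_self _).trans
          (norm_le_integral_norm_of_hasDerivAt (hasDerivAt_kerK_self N) hint hint' x)
    _ = √(2 * N) * ∫ t, |osc (N - 1) t * osc N t| := by
        simp_rw [norm_neg, norm_mul _ (_ * _), norm_of_nonneg (sqrt_nonneg _),
          integral_const_mul, norm_eq_abs]
    _ ≤ √(2 * N) * 1 := by
        gcongr
        exact integral_abs_osc_mul_osc_le_one _ _
    _ = √(2 * N) := mul_one _

/-! ### Row norms of the rescaled kernel -/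

lemma sq_sum_mul_eq {R ι : Type*} [CommSemiring R] (s : Finset ι) (a b : ι → R) :
    (∑ i ∈ s, a i * b i) ^ 2 = ∑ i ∈ s, ∑ j ∈ s, a i * a j * (b i * b j) := by
  simp_rw [sq, Finset.sum_mul_sum, mul_mul_mul_comm]

section OrthonormalSums

variable {α ι : Type*} [MeasurableSpace α] {μ : Measure α} {φ : ι → α → ℝ}

lemma integrable_sq_sum_mul (hint : ∀ i j, Integrable (fun x => φ i x * φ j x) μ)
    (s : Finset ι) (a : ι → ℝ) : Integrable (fun x => (∑ i ∈ s, a i * φ i x) ^ 2) μ := by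
  simp_rw [sq_sum_mul_eq]
  exact integrable_finsetSum _ fun i _ => integrable_finsetSum _ fun j _ =>
    (hint i j).const_mul _

lemma integral_sq_sum_mul [DecidableEq ι]
    (hint : ∀ i j, Integrable (fun x => φ i x * φ j x) μ)
    (horth : ∀ i j, ∫ x, φ i x * φ j x ∂μ = if i = j then 1 else 0)
    (s : Finset ι) (a : ι → ℝ) :
    ∫ x, (∑ i ∈ s, a i * φ i x) ^ 2 ∂μ = ∑ i ∈ s, a i * a i := by
  simp_rw [sq_sum_mul_eq]
  rw [integral_finsetSum _ fun i _ => integrable_finsetSum _ fun j _ => (hint i j).const_mul _]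
  refine Finset.sum_congr rfl fun i hi => ?_
  rw [integral_finsetSum _ fun j _ => (hint i j).const_mul _]
  simp_rw [integral_const_mul, horth]
  simp [hi]

end OrthonormalSums

lemma kerL_comm (N : ℕ) (x y : ℝ) : kerL N x y = kerL N y x := by
  simp_rw [kerL, kerK, mul_comm (osc _ (√N * x))]

lemma continuous_uncurry_kerL (N : ℕ) : Continuous (Function.uncurry (kerL N)) := by
  have := continuous_osc
  unfold kerL kerK Function.uncurry
  fun_prop

lemma integrable_kerL_sq (N : ℕ) (x : ℝ) : Integrable fun y => kerL N x y ^ 2 := by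
  obtain rfl | hN := N.eq_zero_or_pos
  · simp [kerL]
  have hK := integrable_sq_sum_mul integrable_osc_mul_osc (Finset.range N)
    fun k => osc k (√N * x)
  simp_rw [kerL, mul_pow]
  exact (hK.comp_mul_left' (by positivity : √(N : ℝ) ≠ 0)).const_mul _

lemma integral_kerL_sq (N : ℕ) (x : ℝ) : ∫ y, kerL N x y ^ 2 = kerL N x x / N := by
  have hscale := Measure.integral_comp_mul_left (fun y => kerK N (√N * x) y ^ 2) √N
  have hproj := integral_sq_sum_mul integrable_osc_mul_osc integral_osc_mul_osc
    (Finset.range N) fun k => osc k (√N * x)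
  simp_rw [kerL, mul_pow]
  rw [integral_const_mul, hscale, abs_of_nonneg (by positivity), smul_eq_mul]
  simp only [kerK] at hproj ⊢
  rw [hproj, inv_pow, sq_sqrt N.cast_nonneg]
  ring

lemma kerL_self_le (N : ℕ) (x : ℝ) : kerL N x x ≤ √2 := by
  calc kerL N x x ≤ (√N)⁻¹ * √(2 * N) := by
        unfold kerL
        gcongr
        exact kerK_self_le N _
    _ = √2 * ((√N)⁻¹ * √N) := by rw [sqrt_mul zero_le_two]; ring
    _ ≤ √2 := mul_le_of_le_one_right (sqrt_nonneg 2) inv_mul_le_one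

lemma lintegral_enorm_kerL_sq_le (N : ℕ) (x : ℝ) :
    ∫⁻ y, ‖kerL N x y‖ₑ ^ 2 ≤ ENNReal.ofReal (√2 / N) := by
  have hsq (y : ℝ) : ‖kerL N x y‖ₑ ^ 2 = ENNReal.ofReal (kerL N x y ^ 2) := by
    rw [← enorm_pow, enorm_of_nonneg (sq_nonneg _)]
  simp_rw [hsq]
  rw [← ofReal_integral_eq_lintegral_ofReal (integrable_kerL_sq N x)
    (.of_forall fun _ => sq_nonneg _), integral_kerL_sq]
  gcongr
  exact kerL_self_le N x

/-! ### A weighted Schur bound -/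

lemma ennreal_two_mul_mul_le_sq_add_sq (a b : ENNReal) : 2 * (a * b) ≤ a ^ 2 + b ^ 2 := by
  induction a with
  | top => simp
  | coe a =>
    induction b with
    | top => simp
    | coe b => exact_mod_cast mul_assoc 2 a b ▸ two_mul_le_add_sq a b

lemma lintegral_lintegral_mul_mul_le_of_symm {α : Type*} [MeasurableSpace α] {μ : Measure α}
    [SFinite μ] {a : α → ENNReal} {k : α → α → ENNReal} {A : ENNReal} (ha : Measurable a)
    (hk : Measurable (Function.uncurry k)) (hsymm : ∀ x y, k x y = k y x)
    (hA : ∀ x, ∫⁻ y, k x y ∂μ ≤ A) :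
    ∫⁻ x, ∫⁻ y, a x * a y * k x y ∂μ ∂μ ≤ (∫⁻ x, a x ^ 2 ∂μ) * A := by
  have hk_section (x : α) : Measurable (k x) := hk.comp measurable_prodMk_left
  have hmeas : Measurable (Function.uncurry fun x y => a x ^ 2 * k x y) :=
    ((ha.comp measurable_fst).pow_const 2).mul hk
  have hrow : ∫⁻ x, ∫⁻ y, a x ^ 2 * k x y ∂μ ∂μ ≤ (∫⁻ x, a x ^ 2 ∂μ) * A := by
    rw [← lintegral_mul_const _ (ha.pow_const 2)]
    refine lintegral_mono fun x => ?_
    rw [lintegral_const_mul _ (hk_section x)]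
    gcongr
    exact hA x
  have hswap : ∫⁻ x, ∫⁻ y, a y ^ 2 * k x y ∂μ ∂μ = ∫⁻ x, ∫⁻ y, a x ^ 2 * k x y ∂μ ∂μ := by
    rw [lintegral_lintegral_swap hmeas.aemeasurable]
    simp_rw [hsymm]
  rw [← ENNReal.mul_le_mul_iff_right two_ne_zero ENNReal.ofNat_ne_top]
  calc 2 * ∫⁻ x, ∫⁻ y, a x * a y * k x y ∂μ ∂μ
      = ∫⁻ x, ∫⁻ y, 2 * (a x * a y) * k x y ∂μ ∂μ := by
        simp_rw [mul_assoc, lintegral_const_mul' _ _ ENNReal.ofNat_ne_top]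
    _ ≤ ∫⁻ x, ∫⁻ y, a x ^ 2 * k x y + a y ^ 2 * k x y ∂μ ∂μ := by
        gcongr with x y
        rw [← add_mul]
        gcongr
        exact ennreal_two_mul_mul_le_sq_add_sq _ _
    _ = ∫⁻ x, ∫⁻ y, a x ^ 2 * k x y ∂μ ∂μ + ∫⁻ x, ∫⁻ y, a y ^ 2 * k x y ∂μ ∂μ := by
        rw [← lintegral_add_left hmeas.lintegral_prod_right]
        refine lintegral_congr fun x => lintegral_add_left ?_ _
        exact (hk_section x).const_mul _
    _ ≤ 2 * ((∫⁻ x, a x ^ 2 ∂μ) * A) := by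
        rw [hswap, ← two_mul]
        gcongr

/-! ### The off-diagonal integral -/

lemma lintegral_comp_abs (f : ℝ → ENNReal) : ∫⁻ x, f |x| = 2 * ∫⁻ x in Ioi 0, f x := by
  have hpos : ∫⁻ x in Ioi 0, f |x| = ∫⁻ x in Ioi 0, f x :=
    setLIntegral_congr_fun measurableSet_Ioi fun x hx => by rw [abs_of_pos hx]
  have hneg : ∫⁻ x in Iic 0, f |x| = ∫⁻ x in Ioi 0, f x := by
    rw [setLIntegral_congr Iio_ae_eq_Iic.symm, ← hpos]
    simpa using (Measure.measurePreserving_neg (volume : Measure ℝ)).setLIntegral_comp_preimage_emb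
      (MeasurableEquiv.neg ℝ).measurableEmbedding (fun x => f |x|) (Ioi 0)
  rw [← lintegral_add_compl _ measurableSet_Ioi, compl_Ioi, hpos, hneg, two_mul]

lemma setLIntegral_Ioi_enorm_inv_sq {δ : ℝ} (hδ : 0 < δ) :
    ∫⁻ u in Ioi δ, ‖u⁻¹‖ₑ ^ 2 = ENNReal.ofReal δ⁻¹ := by
  have hrpow : EqOn (fun u : ℝ => ‖u⁻¹‖ₑ ^ 2) (fun u => ENNReal.ofReal (u ^ (-2 : ℝ))) (Ioi δ) := by
    intro u hu
    have hu0 : 0 ≤ u := (hδ.trans hu).le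
    simp [← enorm_pow, enorm_of_nonneg (inv_nonneg.2 (sq_nonneg u)), rpow_neg hu0]
  rw [setLIntegral_congr_fun measurableSet_Ioi hrpow, ← ofReal_integral_eq_lintegral_ofReal
    (integrableOn_Ioi_rpow_of_lt (by norm_num) hδ), integral_Ioi_rpow_of_lt (by norm_num) hδ]
  · norm_num [rpow_neg_one]
  · filter_upwards [ae_restrict_mem measurableSet_Ioi] with u hu
    exact rpow_nonneg (hδ.trans hu).le _

lemma setLIntegral_enorm_inv_sub_sq {δ : ℝ} (hδ : 0 < δ) (c : ℝ) :
    ∫⁻ y in {y | δ ≤ |c - y|}, ‖(c - y)⁻¹‖ₑ ^ 2 = ENNReal.ofReal (2 / δ) := by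
  have hset : MeasurableSet {u : ℝ | δ ≤ |u|} := measurableSet_le measurable_const measurable_abs
  have habs : {u : ℝ | δ ≤ |u|}.indicator (fun u : ℝ => ‖u⁻¹‖ₑ ^ 2) =
      fun u => (Ici δ).indicator (fun u => ‖u⁻¹‖ₑ ^ 2) |u| := by
    ext u
    simp only [indicator, mem_ofPred_eq, mem_Ici, ← abs_inv, enorm_abs]
  calc ∫⁻ y in {y | δ ≤ |c - y|}, ‖(c - y)⁻¹‖ₑ ^ 2
      = ∫⁻ u in {u | δ ≤ |u|}, ‖u⁻¹‖ₑ ^ 2 :=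
        (Measure.measurePreserving_sub_left volume c).setLIntegral_comp_preimage hset
          (f := fun u => ‖u⁻¹‖ₑ ^ 2) (by fun_prop)
    _ = 2 * ∫⁻ u in Ioi 0, (Ici δ).indicator (fun u => ‖u⁻¹‖ₑ ^ 2) u := by
        rw [← lintegral_indicator hset, habs, lintegral_comp_abs]
    _ = 2 * ∫⁻ u in Ioi δ, ‖u⁻¹‖ₑ ^ 2 := by
        rw [setLIntegral_indicator measurableSet_Ici,
          inter_eq_left.2 (Ici_subset_Ioi.2 hδ), setLIntegral_congr Ioi_ae_eq_Ici]
    _ = ENNReal.ofReal (2 / δ) := by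
        rw [setLIntegral_Ioi_enorm_inv_sq hδ, div_eq_mul_inv, ENNReal.ofReal_mul zero_le_two,
          ENNReal.ofReal_ofNat]

lemma enorm_integral_integral_le {α β E : Type*} [MeasurableSpace α] [MeasurableSpace β]
    [NormedAddCommGroup E] [NormedSpace ℝ E] (μ : Measure α) (ν : Measure β) (f : α → β → E) :
    ‖∫ x, ∫ y, f x y ∂ν ∂μ‖ₑ ≤ ∫⁻ x, ∫⁻ y, ‖f x y‖ₑ ∂ν ∂μ :=
  (enorm_integral_le_lintegral_enorm _).trans
    (lintegral_mono fun _ => enorm_integral_le_lintegral_enorm _)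

lemma lintegral_lintegral_enorm_kerL_sq_div_le (N : ℕ) {δ : ℝ} (hδ : 0 < δ) (c : ℝ) :
    ∫⁻ y in {y | δ ≤ |c - y|}, ∫⁻ z in {z | δ ≤ |c - z|},
      ‖kerL N y z ^ 2 / (|c - y| * |c - z|)‖ₑ ≤ ENNReal.ofReal (2 / δ * (√2 / N)) := by
  have hfactor (y z : ℝ) : ‖kerL N y z ^ 2 / (|c - y| * |c - z|)‖ₑ =
      ‖(c - y)⁻¹‖ₑ * ‖(c - z)⁻¹‖ₑ * ‖kerL N y z‖ₑ ^ 2 := by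
    rw [div_eq_inv_mul, mul_inv, ← abs_inv, ← abs_inv, enorm_mul, enorm_mul, enorm_abs,
      enorm_abs, enorm_pow]
  simp_rw [hfactor]
  rw [ENNReal.ofReal_mul (by positivity), ← setLIntegral_enorm_inv_sub_sq hδ c]
  exact lintegral_lintegral_mul_mul_le_of_symm (by fun_prop)
    ((continuous_uncurry_kerL N).measurable.enorm.pow_const 2)
    (fun y z => by rw [kerL_comm])
    fun y => (setLIntegral_le_lintegral _ _).trans (lintegral_enorm_kerL_sq_le N y)

lemma integral_integral_kerL_sq_div_le (N : ℕ) {δ : ℝ} (hδ : 0 < δ) (c : ℝ) :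
    ∫ y in {y | δ ≤ |c - y|}, ∫ z in {z | δ ≤ |c - z|},
      kerL N y z ^ 2 / (|c - y| * |c - z|) ≤ 2 / δ * (√2 / N) :=
  (ENNReal.ofReal_le_ofReal_iff (by positivity)).1 <| (ofReal_le_enorm _).trans <|
    (enorm_integral_integral_le _ _ _).trans <|
      lintegral_lintegral_enorm_kerL_sq_div_le N hδ c

theorem variance_offdiagonal_general {ε : ℝ} (hε : 0 < ε) :
    ∃ r0 : ℝ, ∀ r : ℝ, r0 ≤ r → ∀ N : ℕ, 1 ≤ N → ∀ c : ℝ,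
      (∫ y in {y : ℝ | r / (N : ℝ) ≤ |c - y|}, ∫ z in {z : ℝ | r / (N : ℝ) ≤ |c - z|},
        kerL N y z ^ 2 / (|c - y| * |c - z|)) < ε := by
  refine ⟨4 / ε, fun r hr N hN c => ?_⟩
  have hN0 : (0 : ℝ) < N := by exact_mod_cast hN
  have hr0 : 0 < r := (div_pos four_pos hε).trans_le hr
  have hsqrt : √2 < 2 := (sqrt_lt' two_pos).2 (by norm_num)
  calc _ ≤ 2 / (r / N) * (√2 / N) := integral_integral_kerL_sq_div_le N (div_pos hr0 hN0) c
    _ = 2 * √2 / r := by field_simp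
    _ < 4 / r := by gcongr; linarith
    _ ≤ ε := (div_le_comm₀ hr0 hε).2 hr

/-- Variance estimate, off-diagonal part (Lemma 4.6, second part). -/
theorem variance_offdiagonal (θ : ℝ) (hθ1 : -Real.sqrt 2 < θ) (hθ2 : θ < Real.sqrt 2)
    (R : ℕ) (hR : 1 ≤ R) :
    ∀ ε : ℝ, 0 < ε → ∃ r0 : ℝ, ∀ r : ℝ, r0 ≤ r → ∃ N0 : ℕ, ∀ N : ℕ, N0 ≤ N →
      ∀ x : ℝ, |x| < (R : ℝ) →
      (∫ y in {y : ℝ | r / (N : ℝ) ≤ |x / (N : ℝ) + θ - y|},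
        ∫ z in {z : ℝ | r / (N : ℝ) ≤ |x / (N : ℝ) + θ - z|},
          kerL N y z ^ 2 /
            (|x / (N : ℝ) + θ - y| * |x / (N : ℝ) + θ - z|)) < ε := by
  intro ε hε
  obtain ⟨r0, h⟩ := variance_offdiagonal_general hε
  exact ⟨r0, fun r hr => ⟨1, fun N hN x _ => h r hr N hN (x / N + θ)⟩⟩
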